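/- arXiv:2409.01507 — 2 statements merged into one kernel-verified Lean document; each statement's English description precedes it below -/
import Mathlib

section
/- For every p ∈ [1,3) there exists a sequence (fₙ) of bounded measurable 2π-periodic functions fₙ : ℝ → ℝ and a constant C₀ such that ‖fₙ‖_{L^p(0,2π)} ≤ C₀ for all n while ‖C[fₙ]‖_{L^p(0,2π)} → ∞ as n → ∞. In particular, there is no constant C' such that ‖C[f]‖_{L^p(0,2π)} ≤ C' ‖f‖_{L^p(0,2π)}³ holds for all bounded measurable 2π-periodic f. -/
open MeasureTheory Real Set

noncomputable section

/-- The dispersion relation `ω(p) = |sin(p/2)|`. -/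
def ω (p : ℝ) : ℝ := |Real.sin (p / 2)|

/-- Parameterization `h(x,z)` of the resonant manifold. -/
def resH (x z : ℝ) : ℝ :=
  (z - x) / 2 + 2 * Real.arcsin (Real.tan (|z - x| / 4) * Real.cos ((x + z) / 4))

/-- `F₊(x,z) = (cos(x/2)+cos(z/2))² + 4 sin(x/2) sin(z/2)`. -/
def Fplus (x z : ℝ) : ℝ :=
  (Real.cos (x / 2) + Real.cos (z / 2)) ^ 2 + 4 * Real.sin (x / 2) * Real.sin (z / 2)

/-- `F₋(x,z) = (cos(x/2)+cos(z/2))² − 4 sin(x/2) sin(z/2)`. -/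
def Fminus (x z : ℝ) : ℝ :=
  (Real.cos (x / 2) + Real.cos (z / 2)) ^ 2 - 4 * Real.sin (x / 2) * Real.sin (z / 2)

/-- The collision operator of the FPUT kinetic wave equation, with
`p₁ = h(p₀,p₂)` and `p₃ = p₀ + p₁ − p₂`. -/
def collision (f : ℝ → ℝ) (p₀ : ℝ) : ℝ :=
  ∫ p₂ in (0:ℝ)..(2 * π),
    (ω p₀ * ω (resH p₀ p₂) * ω p₂ * ω (p₀ + resH p₀ p₂ - p₂) / Real.sqrt (Fplus p₀ p₂)) *
      (f (resH p₀ p₂) * f p₂ * f (p₀ + resH p₀ p₂ - p₂)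
        + f p₀ * f p₂ * f (p₀ + resH p₀ p₂ - p₂)
        - f p₀ * f (resH p₀ p₂) * f (p₀ + resH p₀ p₂ - p₂)
        - f p₀ * f (resH p₀ p₂) * f p₂)

/-- The measure on the fundamental domain `(0,2π)`. -/
def μ2π : Measure ℝ := volume.restrict (Set.Ioo 0 (2 * π))

lemma fp_abs_le_two_sin {t : ℝ} (ht : |t| ≤ π / 2) : |t| ≤ 2 * |Real.sin t| := by
  have h := Real.mul_abs_le_abs_sin ht
  have h4 := Real.pi_le_four
  have hp := Real.pi_pos
  have : (1:ℝ) / 2 ≤ 2 / π := by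
    rw [div_le_div_iff₀ (by norm_num) hp]; linarith
  nlinarith [abs_nonneg t]

set_option maxHeartbeats 1000000 in
lemma fp_near1 {η a b : ℝ} (h0 : 0 < η) (h1 : η ≤ 1 / 100) (ha : |a| ≤ η ^ 2)
    (hb : |b| ≤ 2 * η) :
    |resH (π / 2 + a) (3 * π / 2 + b) - π / 2| ≤ 18 * η ^ 2 := by
  have hpi := Real.pi_gt_three
  have hpi2 := Real.pi_lt_d2
  have hηη : η ^ 2 ≤ η / 100 := by nlinarith
  obtain ⟨d, hd⟩ : ∃ d, d = (b - a) / 4 := ⟨_, rfl⟩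
  obtain ⟨e, he⟩ : ∃ e, e = (a + b) / 4 := ⟨_, rfl⟩
  have ha' := abs_le.1 ha
  have hb' := abs_le.1 hb
  have hdb : |d| ≤ 3 / 4 * η := by rw [abs_le]; constructor <;> linarith
  have heb : |e| ≤ 3 / 4 * η := by rw [abs_le]; constructor <;> linarith
  have hd' := abs_le.1 hdb
  have habs : |3 * π / 2 + b - (π / 2 + a)| / 4 = π / 4 + d := by
    rw [abs_of_nonneg (by linarith), hd]; ring
  have hcos : Real.cos ((π / 2 + a + (3 * π / 2 + b)) / 4) = - Real.sin e := by
    rw [show (π / 2 + a + (3 * π / 2 + b)) / 4 = e + π / 2 by rw [he]; ring, Real.cos_add_pi_div_two]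
  obtain ⟨T, hT⟩ : ∃ T, T = Real.tan (π / 4 + d) * Real.sin e := ⟨_, rfl⟩
  obtain ⟨θ, hθ⟩ : ∃ θ, θ = Real.arcsin T := ⟨_, rfl⟩
  have hres : resH (π / 2 + a) (3 * π / 2 + b) - π / 2 = 2 * (d - θ) := by
    unfold resH
    rw [habs, hcos, mul_neg, ← hT, Real.arcsin_neg, ← hθ, hd]; ring
  -- bounds on trig functions of d
  have hsd : |Real.sin d| ≤ |d| := Real.abs_sin_le_abs
  have hcd : 1 - d ^ 2 / 2 ≤ Real.cos d := Real.one_sub_sq_div_two_le_cos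
  have hsd2 := abs_le.1 (hsd.trans hdb)
  have hcs : 1 / 2 ≤ Real.cos d - Real.sin d := by nlinarith
  have htan : Real.tan (π / 4 + d) - 1 = 2 * Real.sin d / (Real.cos d - Real.sin d) := by
    rw [Real.tan_eq_sin_div_cos, Real.sin_add, Real.cos_add, Real.sin_pi_div_four,
      Real.cos_pi_div_four]
    have h2 : (0:ℝ) < √2 := by positivity
    have h3 : √2 / 2 * Real.cos d - √2 / 2 * Real.sin d ≠ 0 := by
      rw [← mul_sub]; positivity
    have h4 : Real.cos d - Real.sin d ≠ 0 := by linarith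
    field_simp
    ring
  have htan2 : |Real.tan (π / 4 + d) - 1| ≤ 4 * |d| := by
    rw [htan, abs_div, abs_mul, abs_of_pos (show (0:ℝ) < Real.cos d - Real.sin d by linarith),
      div_le_iff₀ (by linarith), abs_two]
    nlinarith [abs_nonneg d]
  have hse : |Real.sin e| ≤ |e| := Real.abs_sin_le_abs
  have hsed : |Real.sin e - Real.sin d| ≤ |a| / 2 := by
    have h := Real.sin_sub_sin e d
    rw [h, abs_mul, abs_mul, abs_two]
    have h5 : |Real.sin ((e - d) / 2)| ≤ |(e - d) / 2| := Real.abs_sin_le_abs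
    have h6 := Real.abs_cos_le_one ((e + d) / 2)
    have h7 : |(e - d) / 2| = |a| / 4 := by
      rw [show (e - d) / 2 = a / 4 by rw [hd, he]; ring, abs_div]; norm_num
    nlinarith [abs_nonneg (Real.sin ((e - d) / 2)), abs_nonneg (Real.cos ((e + d) / 2))]
  have hTd : |T - Real.sin d| ≤ 11 / 4 * η ^ 2 := by
    have : T - Real.sin d = (Real.tan (π / 4 + d) - 1) * Real.sin e + (Real.sin e - Real.sin d) := by
      rw [hT]; ring
    rw [this]
    refine (abs_add_le _ _).trans ?_
    rw [abs_mul]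
    have : |Real.tan (π / 4 + d) - 1| * |Real.sin e| ≤ (4 * (3 / 4 * η)) * (3 / 4 * η) := by
      apply mul_le_mul
      · linarith
      · linarith
      · positivity
      · positivity
    nlinarith
  have hsd3 := abs_le.1 hTd
  have hsinθ : Real.sin θ = T := by
    rw [hθ]; apply Real.sin_arcsin <;> linarith
  have hθ1 : -(π / 2) ≤ θ := hθ ▸ Real.neg_pi_div_two_le_arcsin T
  have hθ2 : θ ≤ π / 2 := hθ ▸ Real.arcsin_le_pi_div_two T
  have hc : 1 / 2 ≤ Real.cos ((θ + d) / 2) := by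
    rw [← Real.cos_pi_div_three, ← Real.cos_abs ((θ + d) / 2)]
    have : |(θ + d) / 2| ≤ π / 3 := by rw [abs_le]; constructor <;> linarith
    exact Real.cos_le_cos_of_nonneg_of_le_pi (abs_nonneg _) (by linarith) this
  have hs : 2 / π * |(θ - d) / 2| ≤ |Real.sin ((θ - d) / 2)| := by
    apply Real.mul_abs_le_abs_sin
    rw [abs_le]; constructor <;> linarith
  have hmain : |θ - d| ≤ π * |T - Real.sin d| := by
    rw [← hsinθ, Real.sin_sub_sin, abs_mul, abs_mul, abs_two,
      abs_of_pos (show (0:ℝ) < Real.cos ((θ + d) / 2) by linarith)]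
    rw [abs_div, abs_two] at hs
    have h8 : |θ - d| ≤ π * |Real.sin ((θ - d) / 2)| := by
      have : |θ - d| = π * (2 / π * (|θ - d| / 2)) := by field_simp
      rw [this]; exact mul_le_mul_of_nonneg_left hs (by linarith)
    have h9 : 0 ≤ π * |Real.sin ((θ - d) / 2)| := by positivity
    nlinarith
  rw [hres, abs_mul, abs_two, abs_sub_comm]
  have hfin : π * |T - Real.sin d| ≤ 3.15 * (11 / 4 * η ^ 2) :=
    mul_le_mul hpi2.le hTd (abs_nonneg _) (by norm_num)
  have := sq_nonneg η
  linarith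

lemma fp_near0 {a b : ℝ} (ha : |a| ≤ 1 / 100) (hb : |b| ≤ 1 / 100) :
    |resH (π / 2 + a) (π / 2 + b)| ≤ 1 / 4 := by
  have ha' := abs_le.1 ha
  have hb' := abs_le.1 hb
  unfold resH
  rw [show π / 2 + b - (π / 2 + a) = b - a by ring]
  have hba : |b - a| ≤ 1 / 50 := by rw [abs_le]; constructor <;> linarith
  obtain ⟨y, hy⟩ : ∃ y, y = |b - a| / 4 := ⟨_, rfl⟩
  have hy0 : 0 ≤ y := by rw [hy]; positivity
  have hy1 : y ≤ 1 / 200 := by rw [hy]; linarith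
  rw [← hy]
  obtain ⟨T, hT⟩ : ∃ T, T = Real.tan y * Real.cos ((π / 2 + a + (π / 2 + b)) / 4) := ⟨_, rfl⟩
  rw [← hT]
  have hsy : Real.sin y ≤ y := Real.sin_le hy0
  have hsy0 : 0 ≤ Real.sin y := Real.sin_nonneg_of_nonneg_of_le_pi hy0 (by linarith [Real.pi_gt_three])
  have hcy : 1 - y ^ 2 / 2 ≤ Real.cos y := Real.one_sub_sq_div_two_le_cos
  have hcy2 : 1 / 2 ≤ Real.cos y := by nlinarith
  have htan : |Real.tan y| ≤ 1 / 100 := by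
    rw [Real.tan_eq_sin_div_cos, abs_of_nonneg (by positivity), div_le_iff₀ (by linarith)]
    linarith
  have hTb : |T| ≤ 1 / 100 := by
    rw [hT, abs_mul]
    nlinarith [Real.abs_cos_le_one ((π / 2 + a + (π / 2 + b)) / 4), abs_nonneg (Real.tan y),
      abs_nonneg (Real.cos ((π / 2 + a + (π / 2 + b)) / 4))]
  have hT' := abs_le.1 hTb
  have hθ : |Real.arcsin T| ≤ 2 * |T| := by
    have := fp_abs_le_two_sin (t := Real.arcsin T)
      (abs_le.2 ⟨Real.neg_pi_div_two_le_arcsin T, Real.arcsin_le_pi_div_two T⟩)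
    rwa [Real.sin_arcsin (by linarith) (by linarith)] at this
  have hθ' := abs_le.1 (hθ.trans (by linarith : 2 * |T| ≤ 1 / 50))
  have hba' := abs_le.1 hba
  rw [abs_le]; constructor <;> linarith

lemma fp_loc1 {x δ : ℝ} (h0 : 0 < x) (h1 : x < 2 * π) (hs : 0 < Real.sin x)
    (hc : |Real.cos x| ≤ δ) : |x - π / 2| ≤ 2 * δ := by
  have hx : x < π := by
    by_contra h
    push Not at h
    have : Real.sin x ≤ 0 := by
      have := Real.sin_nonneg_of_nonneg_of_le_pi (x := x - π) (by linarith) (by linarith)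
      rw [Real.sin_sub_pi] at this; linarith
    linarith
  have := fp_abs_le_two_sin (t := x - π / 2) (by rw [abs_le]; constructor <;> linarith)
  rw [Real.sin_sub_pi_div_two, abs_neg] at this
  linarith

lemma fp_loc2 {x δ : ℝ} (h0 : 0 < x) (h1 : x < 2 * π) (hs : Real.sin x < 0)
    (hc : |Real.cos x| ≤ δ) : |x - 3 * π / 2| ≤ 2 * δ := by
  have hx : π < x := by
    by_contra h
    push Not at h
    have := Real.sin_nonneg_of_nonneg_of_le_pi (x := x) (by linarith) (by linarith)
    linarith
  have := fp_abs_le_two_sin (t := x - π - π / 2) (by rw [abs_le]; constructor <;> linarith)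
  rw [Real.sin_sub_pi_div_two, abs_neg, Real.cos_sub_pi, abs_neg] at this
  rw [show x - 3 * π / 2 = x - π - π / 2 by ring]
  linarith

open Classical in
/-- Two-bump test function. -/
def fpBump (η A B x : ℝ) : ℝ :=
  if 0 < Real.sin x ∧ |Real.cos x| ≤ 18 * η ^ 2 then A
  else if Real.sin x < 0 ∧ |Real.cos x| ≤ η then B else 0

lemma fpBump_meas (η A B : ℝ) : Measurable (fpBump η A B) := by
  unfold fpBump
  refine Measurable.ite ?_ measurable_const (Measurable.ite ?_ measurable_const measurable_const)
  · exact (measurableSet_lt measurable_const Real.measurable_sin).inter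
      (measurableSet_le (Real.continuous_cos.abs.measurable) measurable_const)
  · exact (measurableSet_lt Real.measurable_sin measurable_const).inter
      (measurableSet_le (Real.continuous_cos.abs.measurable) measurable_const)

lemma fpBump_periodic (η A B : ℝ) : Function.Periodic (fpBump η A B) (2 * π) := by
  intro x
  simp only [fpBump, Real.sin_add_two_pi, Real.cos_add_two_pi]

lemma fpBump_nonneg {η A B : ℝ} (hA : 0 ≤ A) (hB : 0 ≤ B) (x : ℝ) : 0 ≤ fpBump η A B x := by
  unfold fpBump; split_ifs <;> simp [hA, hB]

lemma fpBump_le {η A B : ℝ} (hA : 0 ≤ A) (hBA : B ≤ A) (x : ℝ) : fpBump η A B x ≤ A := by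
  unfold fpBump; split_ifs <;> simp [hA, hBA]

lemma fpBump_eq_A {η A B t : ℝ} (h1 : η ≤ 1 / 100) (h0 : 0 < η) (ht : |t - π / 2| ≤ 18 * η ^ 2) :
    fpBump η A B t = A := by
  unfold fpBump
  rw [if_pos]
  have hs : |Real.sin (t - π / 2)| ≤ |t - π / 2| := Real.abs_sin_le_abs
  have hc : 1 - (t - π / 2) ^ 2 / 2 ≤ Real.cos (t - π / 2) := Real.one_sub_sq_div_two_le_cos
  rw [Real.sin_sub_pi_div_two, abs_neg] at hs
  rw [Real.cos_sub_pi_div_two] at hc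
  refine ⟨?_, by linarith⟩
  have : |t - π / 2| ≤ 1 := by nlinarith
  have := (sq_le_one_iff_abs_le_one _).2 this
  linarith

/-- near `-π/2` the bump takes value `0` or `B` -/
lemma fpBump_zero_or_B {η A B t : ℝ} (ht : |t + π / 2| ≤ 1) :
    fpBump η A B t = 0 ∨ fpBump η A B t = B := by
  have hc : 1 - (t + π / 2) ^ 2 / 2 ≤ Real.cos (t + π / 2) := Real.one_sub_sq_div_two_le_cos
  rw [Real.cos_add_pi_div_two] at hc
  have := (sq_le_one_iff_abs_le_one _).2 ht
  unfold fpBump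
  rw [if_neg (by intro h; linarith [h.1])]
  split_ifs <;> simp

lemma fpBump_eq_zero {η A B t : ℝ} (h0 : 0 < η) (h1 : η ≤ 1 / 100) (ht : |t| ≤ 1) :
    fpBump η A B t = 0 := by
  have hc : 1 - t ^ 2 / 2 ≤ Real.cos t := Real.one_sub_sq_div_two_le_cos
  have := (sq_le_one_iff_abs_le_one _).2 ht
  have hc' := le_abs_self (Real.cos t)
  unfold fpBump
  rw [if_neg (by intro h; nlinarith [h.2]), if_neg (by intro h; nlinarith [h.2])]

lemma fpBump_eq_B {η A B t : ℝ} (h1 : η ≤ 1 / 100) (h0 : 0 < η) (ht : |t - 3 * π / 2| ≤ η) :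
    fpBump η A B t = B := by
  have hs : |Real.sin (t - π - π / 2)| ≤ |t - π - π / 2| := Real.abs_sin_le_abs
  have hc : 1 - (t - π - π / 2) ^ 2 / 2 ≤ Real.cos (t - π - π / 2) :=
    Real.one_sub_sq_div_two_le_cos
  rw [Real.sin_sub_pi_div_two, abs_neg, Real.cos_sub_pi, abs_neg] at hs
  rw [Real.cos_sub_pi_div_two, Real.sin_sub_pi] at hc
  rw [show t - 3 * π / 2 = t - π - π / 2 by ring] at ht
  have : |t - π - π / 2| ≤ 1 := by linarith
  have := (sq_le_one_iff_abs_le_one _).2 this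
  unfold fpBump
  rw [if_neg (by intro h; linarith [h.1]), if_pos ⟨by linarith, by linarith⟩]

/-- The bracket. -/
def fpBr (f : ℝ → ℝ) (p₀ p₂ : ℝ) : ℝ :=
  f (resH p₀ p₂) * f p₂ * f (p₀ + resH p₀ p₂ - p₂)
        + f p₀ * f p₂ * f (p₀ + resH p₀ p₂ - p₂)
        - f p₀ * f (resH p₀ p₂) * f (p₀ + resH p₀ p₂ - p₂)
        - f p₀ * f (resH p₀ p₂) * f p₂

def fpW (p₀ p₂ : ℝ) : ℝ :=
  ω p₀ * ω (resH p₀ p₂) * ω p₂ * ω (p₀ + resH p₀ p₂ - p₂) / Real.sqrt (Fplus p₀ p₂)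

lemma fpW_nonneg (x z : ℝ) : 0 ≤ fpW x z := by
  unfold fpW ω; positivity

lemma fp_br_E2 {η A B a b : ℝ} (h0 : 0 < η) (h1 : η ≤ 1 / 100) (hB : 0 < B) (hBA : 2 * B ≤ A)
    (ha : |a| ≤ η ^ 2) (hb : |b| ≤ 2 * η) (hfz : fpBump η A B (3 * π / 2 + b) = B) :
    fpBr (fpBump η A B) (π / 2 + a) (3 * π / 2 + b) ≤ - (A ^ 2 * B) := by
  have hn := fp_near1 h0 h1 ha hb
  have h2 : fpBump η A B (π / 2 + a) = A := by
    apply fpBump_eq_A h1 h0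
    rw [add_sub_cancel_left]; nlinarith
  have h3 := fpBump_eq_A (A := A) (B := B) h1 h0 hn
  have hηη : η ^ 2 ≤ η / 100 := by nlinarith
  have ha' := abs_le.1 ha
  have hb' := abs_le.1 hb
  have hn' := abs_le.1 hn
  have h4 : fpBump η A B (π / 2 + a + resH (π / 2 + a) (3 * π / 2 + b) - (3 * π / 2 + b)) = 0 ∨
      fpBump η A B (π / 2 + a + resH (π / 2 + a) (3 * π / 2 + b) - (3 * π / 2 + b)) = B := by
    apply fpBump_zero_or_B
    rw [abs_le]; constructor <;> linarith
  unfold fpBr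
  rw [h2, h3, hfz]
  have hAB : 0 ≤ A * B := by nlinarith
  rcases h4 with h4 | h4 <;> rw [h4] <;> nlinarith

lemma fp_br_le {η A B a z : ℝ} (h0 : 0 < η) (h1 : η ≤ 1 / 100) (hB : 0 < B) (hBA : 2 * B ≤ A)
    (ha : |a| ≤ η ^ 2) (hz0 : 0 < z) (hz1 : z < 2 * π) :
    fpBr (fpBump η A B) (π / 2 + a) z ≤ 0 := by
  have hA : 0 ≤ A := by linarith
  by_cases hc1 : 0 < Real.sin z ∧ |Real.cos z| ≤ 18 * η ^ 2
  · have hl := fp_loc1 hz0 hz1 hc1.1 hc1.2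
    obtain ⟨b, rfl⟩ : ∃ b, z = π / 2 + b := ⟨z - π / 2, by ring⟩
    rw [add_sub_cancel_left] at hl
    have hb : |b| ≤ 1 / 100 := by nlinarith
    have ha1 : |a| ≤ 1 / 100 := by nlinarith
    have hn := fp_near0 ha1 hb
    have ha' := abs_le.1 ha1
    have hb' := abs_le.1 hb
    have hn' := abs_le.1 hn
    unfold fpBr
    rw [fpBump_eq_zero h0 h1 (t := resH (π / 2 + a) (π / 2 + b)) (by linarith),
      fpBump_eq_zero h0 h1 (t := π / 2 + a + resH (π / 2 + a) (π / 2 + b) - (π / 2 + b))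
        (by rw [abs_le]; constructor <;> linarith)]
    simp
  by_cases hc2 : Real.sin z < 0 ∧ |Real.cos z| ≤ η
  · have hl := fp_loc2 hz0 hz1 hc2.1 hc2.2
    have hfz : fpBump η A B z = B := by
      unfold fpBump; rw [if_neg hc1, if_pos hc2]
    obtain ⟨b, rfl⟩ : ∃ b, z = 3 * π / 2 + b := ⟨z - 3 * π / 2, by ring⟩
    rw [add_sub_cancel_left] at hl
    refine (fp_br_E2 h0 h1 hB hBA ha hl hfz).trans ?_
    have : 0 ≤ A ^ 2 * B := by positivity
    linarith
  · have hfz : fpBump η A B z = 0 := by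
      unfold fpBump; rw [if_neg hc1, if_neg hc2]
    unfold fpBr
    rw [hfz]
    have := mul_nonneg (mul_nonneg (fpBump_nonneg (η := η) hA hB.le (π / 2 + a))
      (fpBump_nonneg (η := η) hA hB.le (resH (π / 2 + a) z)))
      (fpBump_nonneg (η := η) hA hB.le (π / 2 + a + resH (π / 2 + a) z - z))
    linarith

lemma fp_omega_lower {t s : ℝ} (hs : Real.sin (s / 2) = √2 / 2 ∨ Real.sin (s / 2) = - (√2 / 2))
    (ht : |t - s| ≤ 1 / 10) : 1 / 2 ≤ ω t := by
  have h := Real.sin_sub_sin (t / 2) (s / 2)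
  have h1 : |Real.sin (t / 2) - Real.sin (s / 2)| ≤ 1 / 10 := by
    rw [h, abs_mul, abs_mul, abs_two]
    have h5 : |Real.sin ((t / 2 - s / 2) / 2)| ≤ |(t / 2 - s / 2) / 2| := Real.abs_sin_le_abs
    rw [show (t / 2 - s / 2) / 2 = (t - s) / 4 by ring, abs_div, abs_of_pos (show (0:ℝ) < 4 by norm_num)] at h5
    rw [show (t / 2 - s / 2) / 2 = (t - s) / 4 by ring]
    have h6 := Real.abs_cos_le_one ((t / 2 + s / 2) / 2)
    nlinarith [abs_nonneg (Real.sin ((t - s) / 4)), abs_nonneg (Real.cos ((t / 2 + s / 2) / 2))]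
  have h2 : (1.4:ℝ) ≤ √2 := Real.le_sqrt_of_sq_le (by norm_num)
  have h1' := abs_le.1 h1
  unfold ω
  rw [le_abs]
  rcases hs with hs | hs <;> rw [hs] at h1'
  · left; linarith
  · right; linarith

lemma fp_W_lower {η a b : ℝ} (h0 : 0 < η) (h1 : η ≤ 1 / 100)
    (ha : |a| ≤ η ^ 2) (hb : |b| ≤ 2 * η) :
    1 / 48 ≤ fpW (π / 2 + a) (3 * π / 2 + b) := by
  have hn := fp_near1 h0 h1 ha hb
  have hηη : η ^ 2 ≤ η / 100 := by nlinarith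
  have ha' := abs_le.1 ha
  have hb' := abs_le.1 hb
  have hn' := abs_le.1 hn
  have s1 : Real.sin (π / 2 / 2) = √2 / 2 := by
    rw [show π / 2 / 2 = π / 4 by ring, Real.sin_pi_div_four]
  have s2 : Real.sin (3 * π / 2 / 2) = √2 / 2 := by
    rw [show 3 * π / 2 / 2 = π - π / 4 by ring, Real.sin_pi_sub, Real.sin_pi_div_four]
  have s3 : Real.sin (-(π / 2) / 2) = -(√2 / 2) := by
    rw [show -(π / 2) / 2 = -(π / 4) by ring, Real.sin_neg, Real.sin_pi_div_four]
  have w0 : 1 / 2 ≤ ω (π / 2 + a) :=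
    fp_omega_lower (Or.inl s1) (by rw [abs_le]; constructor <;> linarith)
  have w1 : 1 / 2 ≤ ω (resH (π / 2 + a) (3 * π / 2 + b)) :=
    fp_omega_lower (Or.inl s1) (by rw [abs_le]; constructor <;> linarith)
  have w2 : 1 / 2 ≤ ω (3 * π / 2 + b) :=
    fp_omega_lower (Or.inl s2) (by rw [abs_le]; constructor <;> linarith)
  have w3 : 1 / 2 ≤ ω (π / 2 + a + resH (π / 2 + a) (3 * π / 2 + b) - (3 * π / 2 + b)) :=
    fp_omega_lower (Or.inr s3) (by rw [abs_le]; constructor <;> linarith)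
  have hprod : (1 / 2) * (1 / 2) * (1 / 2) * (1 / 2) ≤ ω (π / 2 + a) *
      ω (resH (π / 2 + a) (3 * π / 2 + b)) * ω (3 * π / 2 + b) *
      ω (π / 2 + a + resH (π / 2 + a) (3 * π / 2 + b) - (3 * π / 2 + b)) := by
    gcongr
  have hF : √(Fplus (π / 2 + a) (3 * π / 2 + b)) ≤ 3 := by
    apply Real.sqrt_le_iff.2 ⟨by norm_num, ?_⟩
    unfold Fplus
    generalize (π / 2 + a) / 2 = u
    generalize (3 * π / 2 + b) / 2 = v
    nlinarith [Real.sin_sq_add_cos_sq u, Real.sin_sq_add_cos_sq v,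
      sq_nonneg (Real.sin u - Real.sin v), sq_nonneg (Real.cos u - Real.cos v)]
  have hF0 : 0 < Fplus (π / 2 + a) (3 * π / 2 + b) := by
    have hpi := Real.pi_gt_three
    unfold Fplus
    have := Real.sin_pos_of_pos_of_lt_pi (x := (π / 2 + a) / 2) (by linarith) (by linarith)
    have := Real.sin_pos_of_pos_of_lt_pi (x := (3 * π / 2 + b) / 2) (by linarith) (by linarith)
    positivity
  have hF1 := Real.sqrt_pos.2 hF0
  unfold fpW
  rw [le_div_iff₀ hF1]
  linarith

lemma fp_resH_meas (x : ℝ) : Measurable (resH x) := by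
  unfold resH
  have h1 : Measurable (fun z : ℝ => Real.tan (|z - x| / 4)) := by
    simp_rw [Real.tan_eq_sin_div_cos]
    apply Measurable.div <;> exact Continuous.measurable (by fun_prop)
  have h2 : Measurable (fun z : ℝ => Real.cos ((x + z) / 4)) := Continuous.measurable (by fun_prop)
  have h3 : Measurable (fun z : ℝ => (z - x) / 2) := Continuous.measurable (by fun_prop)
  exact h3.add ((Real.measurable_arcsin.comp (h1.mul h2)).const_mul 2)

lemma fp_integrable {f : ℝ → ℝ} {M : ℝ} (hf : Measurable f) (hM : ∀ x, |f x| ≤ M) {x : ℝ}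
    (hx0 : 0 < x) (hx1 : x < 2 * π) :
    IntervalIntegrable (fun z => fpW x z * fpBr f x z) volume 0 (2 * π) := by
  have hpi := Real.pi_pos
  have hr := fp_resH_meas x
  have hp3 : Measurable (fun z => x + resH x z - z) := (hr.const_add x).sub measurable_id
  have hFc : Continuous (Fplus x) := by unfold Fplus; fun_prop
  have hω : Measurable ω := by unfold ω; exact Continuous.measurable (by fun_prop)
  have hWm : Measurable (fpW x) := by
    unfold fpW
    exact ((((hω.comp hr).const_mul _).mul hω).mul (hω.comp hp3)).div (hFc.sqrt.measurable)
  have hBm : Measurable (fpBr f x) := by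
    unfold fpBr
    have h1 := hf.comp hr
    have h3 := hf.comp hp3
    exact ((((h1.mul hf).mul h3).add ((hf.const_mul _).mul h3)).sub
      ((h1.const_mul _).mul h3)).sub ((h1.const_mul _).mul hf)
  have hFpos : ∀ z ∈ Icc 0 (2 * π), 0 < Fplus x z := by
    intro z hz
    have hsx := Real.sin_pos_of_pos_of_lt_pi (x := x / 2) (by linarith) (by linarith)
    have hsz := Real.sin_nonneg_of_nonneg_of_le_pi (x := z / 2) (by linarith [hz.1]) (by linarith [hz.2])
    unfold Fplus
    rcases hsz.eq_or_lt with h | h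
    · rw [← h]
      have hcx : Real.cos (x / 2) ^ 2 < 1 := by nlinarith [Real.sin_sq_add_cos_sq (x / 2)]
      have hcz : Real.cos (z / 2) ^ 2 = 1 := by nlinarith [Real.sin_sq_add_cos_sq (z / 2)]
      have : Real.cos (x / 2) + Real.cos (z / 2) ≠ 0 := by
        intro h'
        have : Real.cos (x / 2) = - Real.cos (z / 2) := by linarith
        rw [this] at hcx; nlinarith
      positivity
    · positivity
  obtain ⟨K, hK⟩ := isCompact_Icc.exists_bound_of_continuousOn (s := Icc 0 (2 * π))
    (f := fun z => (√(Fplus x z))⁻¹)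
    (hFc.sqrt.continuousOn.inv₀ (fun z hz => (Real.sqrt_pos.2 (hFpos z hz)).ne'))
  have hM0 : 0 ≤ M := (abs_nonneg _).trans (hM 0)
  have hK0 : 0 ≤ K := (norm_nonneg _).trans (hK 0 ⟨le_rfl, by positivity⟩)
  have hω1 : ∀ t, |ω t| ≤ 1 := fun t => by
    unfold ω; rw [abs_abs]; exact Real.abs_sin_le_one _
  have h3 : ∀ u v w, |f u * f v * f w| ≤ M * M * M := by
    intro u v w
    rw [abs_mul, abs_mul]
    gcongr <;> apply hM
  rw [intervalIntegrable_iff_integrableOn_Ioc_of_le (by positivity)]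
  refine Integrable.mono' (g := fun _ => K * (4 * (M * M * M))) (integrable_const _)
    (hWm.mul hBm).aestronglyMeasurable ?_
  refine (ae_restrict_iff' measurableSet_Ioc).2 (Filter.Eventually.of_forall ?_)
  intro z hz
  rw [norm_mul]
  have hw : ‖fpW x z‖ ≤ K := by
    have := hK z ⟨hz.1.le, hz.2⟩
    unfold fpW
    rw [div_eq_mul_inv, norm_mul]
    have h4 : ‖ω x * ω (resH x z) * ω z * ω (x + resH x z - z)‖ ≤ 1 * 1 * 1 * 1 := by
      rw [norm_mul, norm_mul, norm_mul]
      gcongr <;> apply hω1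
    nlinarith [norm_nonneg (√(Fplus x z))⁻¹]
  have hb : ‖fpBr f x z‖ ≤ 4 * (M * M * M) := by
    unfold fpBr
    have a1 := abs_le.1 (h3 (resH x z) z (x + resH x z - z))
    have a2 := abs_le.1 (h3 x z (x + resH x z - z))
    have a3 := abs_le.1 (h3 x (resH x z) (x + resH x z - z))
    have a4 := abs_le.1 (h3 x (resH x z) z)
    rw [Real.norm_eq_abs, abs_le]
    constructor <;> linarith
  gcongr

lemma fp_collision_le {η A B x : ℝ} (h0 : 0 < η) (h1 : η ≤ 1 / 100) (hB : 0 < B) (hBA : 2 * B ≤ A)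
    (hx : |x - π / 2| ≤ η ^ 2) :
    collision (fpBump η A B) x ≤ - (A ^ 2 * B * η / 24) := by
  have hpi := Real.pi_gt_three
  have hx' := abs_le.1 hx
  have hA : 0 ≤ A := by linarith
  have hint := fp_integrable (fpBump_meas η A B) (M := A)
    (fun y => by rw [abs_of_nonneg (fpBump_nonneg hA hB.le y)]
                 exact fpBump_le hA (by linarith) y) (x := x) (by nlinarith) (by nlinarith)
  change (∫ z in (0:ℝ)..(2 * π), fpW x z * fpBr (fpBump η A B) x z) ≤ _
  have hle : (0:ℝ) ≤ 2 * π := by linarith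
  rw [intervalIntegrable_iff_integrableOn_Ioo_of_le hle] at hint
  rw [intervalIntegral.integral_of_le hle, integral_Ioc_eq_integral_Ioo]
  have hind : IntegrableOn ((Icc (3 * π / 2 - η) (3 * π / 2 + η)).indicator
      (fun _ => - (A ^ 2 * B / 48))) (Ioo 0 (2 * π)) :=
    (integrable_const _).indicator measurableSet_Icc
  refine (setIntegral_mono_on hint hind measurableSet_Ioo ?_).trans ?_
  · intro z hz
    obtain ⟨a, rfl⟩ : ∃ a, x = π / 2 + a := ⟨x - π / 2, by ring⟩
    rw [add_sub_cancel_left] at hx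
    have hW := fpW_nonneg (π / 2 + a) z
    by_cases hzz : z ∈ Icc (3 * π / 2 - η) (3 * π / 2 + η)
    · rw [indicator_of_mem hzz]
      obtain ⟨b, rfl⟩ : ∃ b, z = 3 * π / 2 + b := ⟨z - 3 * π / 2, by ring⟩
      have hb : |b| ≤ η := by rw [abs_le]; constructor <;> linarith [hzz.1, hzz.2]
      have hb2 : |b| ≤ 2 * η := by linarith
      have hfz := fpBump_eq_B (A := A) (B := B) (t := 3 * π / 2 + b) h1 h0
        (by rwa [add_sub_cancel_left])
      have h5 := fp_br_E2 h0 h1 hB hBA hx hb2 hfz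
      have h6 := fp_W_lower h0 h1 hx hb2
      have h7 : 0 ≤ A ^ 2 * B := by positivity
      nlinarith
    · rw [indicator_of_notMem hzz]
      exact mul_nonpos_of_nonneg_of_nonpos hW (fp_br_le h0 h1 hB hBA hx hz.1 hz.2)
  · rw [setIntegral_indicator measurableSet_Icc,
      inter_eq_self_of_subset_right (by
        intro z hz; constructor <;> linarith [hz.1, hz.2]), setIntegral_const]
    simp only [Real.volume_real_Icc, smul_eq_mul]
    rw [max_eq_left (by linarith)]
    apply le_of_eq; ring

lemma fp_ind_norm {p : ℝ} (hp1 : 1 ≤ p) (c r D : ℝ) (hD : 0 ≤ D) (hr : 0 ≤ r) :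
    eLpNorm ((Icc (c - r) (c + r)).indicator (fun _ => D)) (ENNReal.ofReal p) μ2π ≤
      ENNReal.ofReal (D * (2 * r) ^ (1 / p)) := by
  have hp0 : ENNReal.ofReal p ≠ 0 := by simp; linarith
  have hv : μ2π (Icc (c - r) (c + r)) ≤ ENNReal.ofReal (2 * r) := by
    unfold μ2π
    refine (Measure.restrict_apply_le _ _).trans ?_
    rw [Real.volume_Icc]
    apply ENNReal.ofReal_le_ofReal; linarith
  rw [eLpNorm_indicator_const measurableSet_Icc hp0 ENNReal.ofReal_ne_top,
    ENNReal.toReal_ofReal (by linarith), ENNReal.ofReal_mul hD,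
    ← ENNReal.ofReal_rpow_of_nonneg (by positivity) (by positivity), Real.enorm_of_nonneg hD]
  gcongr

lemma fp_bump_pt {η A B x : ℝ} (hA : 0 ≤ A) (hB : 0 ≤ B) (hx : x ∈ Ioo 0 (2 * π)) :
    fpBump η A B x ≤
      (Icc (π / 2 - 36 * η ^ 2) (π / 2 + 36 * η ^ 2)).indicator (fun _ => A) x +
      (Icc (3 * π / 2 - 2 * η) (3 * π / 2 + 2 * η)).indicator (fun _ => B) x := by
  have i1 : 0 ≤ (Icc (π / 2 - 36 * η ^ 2) (π / 2 + 36 * η ^ 2)).indicator (fun _ => A) x :=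
    indicator_nonneg (fun _ _ => hA) x
  have i2 : 0 ≤ (Icc (3 * π / 2 - 2 * η) (3 * π / 2 + 2 * η)).indicator (fun _ => B) x :=
    indicator_nonneg (fun _ _ => hB) x
  unfold fpBump
  split_ifs with c1 c2
  · have h := abs_le.1 (fp_loc1 hx.1 hx.2 c1.1 c1.2)
    have hm : x ∈ Icc (π / 2 - 36 * η ^ 2) (π / 2 + 36 * η ^ 2) :=
      ⟨by linarith [h.1], by linarith [h.2]⟩
    rw [indicator_of_mem hm]
    linarith
  · have h := abs_le.1 (fp_loc2 hx.1 hx.2 c2.1 c2.2)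
    have hm : x ∈ Icc (3 * π / 2 - 2 * η) (3 * π / 2 + 2 * η) :=
      ⟨by linarith [h.1], by linarith [h.2]⟩
    rw [indicator_of_mem hm]
    linarith
  · exact add_nonneg i1 i2

lemma fp_bump_norm {p η A B : ℝ} (hp1 : 1 ≤ p) (h0 : 0 < η) (hA : 0 ≤ A) (hB : 0 ≤ B) :
    eLpNorm (fpBump η A B) (ENNReal.ofReal p) μ2π ≤
      ENNReal.ofReal (A * (72 * η ^ 2) ^ (1 / p) + B * (4 * η) ^ (1 / p)) := by
  have k1 := fp_ind_norm hp1 (π / 2) (36 * η ^ 2) A hA (by positivity)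
  have k2 := fp_ind_norm hp1 (3 * π / 2) (2 * η) B hB (by positivity)
  have hpt := fun x (hx : x ∈ Ioo 0 (2 * π)) => fp_bump_pt (η := η) hA hB hx
  have m1 : Measurable ((Icc (π / 2 - 36 * η ^ 2) (π / 2 + 36 * η ^ 2)).indicator (fun _ => A)) :=
    measurable_const.indicator measurableSet_Icc
  have m2 : Measurable ((Icc (3 * π / 2 - 2 * η) (3 * π / 2 + 2 * η)).indicator (fun _ => B)) :=
    measurable_const.indicator measurableSet_Icc
  rw [show 2 * (36 * η ^ 2) = 72 * η ^ 2 by ring] at k1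
  rw [show 2 * (2 * η) = 4 * η by ring] at k2
  generalize (Icc (π / 2 - 36 * η ^ 2) (π / 2 + 36 * η ^ 2)).indicator (fun _ => A) = g1 at *
  generalize (Icc (3 * π / 2 - 2 * η) (3 * π / 2 + 2 * η)).indicator (fun _ => B) = g2 at *
  have hpe : 1 ≤ ENNReal.ofReal p := by simpa using ENNReal.ofReal_le_ofReal hp1
  rw [ENNReal.ofReal_add (by positivity) (by positivity)]
  refine le_trans ?_ (add_le_add k1 k2)
  have hadd := eLpNorm_add_le (μ := μ2π) m1.aestronglyMeasurable m2.aestronglyMeasurable hpe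
  refine le_trans (eLpNorm_mono_ae ?_) hadd
  unfold μ2π
  refine (ae_restrict_iff' measurableSet_Ioo).2 (Filter.Eventually.of_forall ?_)
  intro x hx
  rw [Pi.add_apply, Real.norm_of_nonneg (fpBump_nonneg hA hB x)]
  exact (hpt x hx).trans (le_abs_self _)

lemma fp_coll_norm {p η A B : ℝ} (hp1 : 1 ≤ p) (h0 : 0 < η) (h1 : η ≤ 1 / 100) (hB : 0 < B)
    (hBA : 2 * B ≤ A) :
    ENNReal.ofReal (A ^ 2 * B * η / 24 * (2 * η ^ 2) ^ (1 / p)) ≤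
      eLpNorm (collision (fpBump η A B)) (ENNReal.ofReal p) μ2π := by
  have hpi := Real.pi_gt_three
  have hp0 : ENNReal.ofReal p ≠ 0 := by simp; linarith
  have hD : 0 ≤ A ^ 2 * B * η / 24 := by positivity
  have hηη : η ^ 2 ≤ η / 100 := by nlinarith
  have : ENNReal.ofReal (A ^ 2 * B * η / 24 * (2 * η ^ 2) ^ (1 / p)) =
      eLpNorm ((Icc (π / 2 - η ^ 2) (π / 2 + η ^ 2)).indicator (fun _ => A ^ 2 * B * η / 24))
        (ENNReal.ofReal p) μ2π := by
    rw [eLpNorm_indicator_const measurableSet_Icc hp0 ENNReal.ofReal_ne_top,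
      ENNReal.toReal_ofReal (by linarith), ENNReal.ofReal_mul hD,
      ← ENNReal.ofReal_rpow_of_nonneg (by positivity) (by positivity), Real.enorm_of_nonneg hD]
    congr 2
    unfold μ2π
    rw [Measure.restrict_apply measurableSet_Icc, inter_eq_self_of_subset_left (by
        intro z hz; constructor <;> linarith [hz.1, hz.2]), Real.volume_Icc]
    congr 1; ring
  rw [this]
  apply eLpNorm_mono
  intro x
  by_cases hx : x ∈ Icc (π / 2 - η ^ 2) (π / 2 + η ^ 2)
  · rw [indicator_of_mem hx, Real.norm_of_nonneg hD, Real.norm_eq_abs]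
    have := fp_collision_le h0 h1 hB hBA (x := x)
      (by rw [abs_le]; constructor <;> linarith [hx.1, hx.2])
    have h2 := neg_le_abs (collision (fpBump η A B) x)
    linarith
  · rw [indicator_of_notMem hx, norm_zero]; positivity

lemma fp_first (p : ℝ) (hp1 : 1 ≤ p) (hp3 : p < 3) :
    ∃ (f : ℕ → ℝ → ℝ) (C₀ : ℝ),
      (∀ n, Measurable (f n) ∧ Function.Periodic (f n) (2 * π) ∧ ∃ B : ℝ, ∀ x, |f n x| ≤ B) ∧
      (∀ n, eLpNorm (f n) (ENNReal.ofReal p) μ2π ≤ ENNReal.ofReal C₀) ∧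
      Filter.Tendsto (fun n => eLpNorm (collision (f n)) (ENNReal.ofReal p) μ2π)
        Filter.atTop (nhds ⊤) := by
  have hp : 0 < p := by linarith
  have hr1 : 1 / p ≤ 1 := by rw [div_le_one hp]; exact hp1
  have hr0 : 0 < 1 / p := by positivity
  have hr3 : 0 < 3 * (1 / p) - 1 := by
    rw [mul_one_div, sub_pos, lt_div_iff₀ hp]; linarith
  generalize hr : 1 / p = r at *
  let m : ℕ → ℝ := fun n => 100 * ((n:ℝ) + 1)
  have hm : ∀ n, 100 ≤ m n := fun n => by
    have : (0:ℝ) ≤ n := n.cast_nonneg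
    simp only [m]; linarith
  have hm0 : ∀ n, 0 < m n := fun n => by linarith [hm n]
  let η : ℕ → ℝ := fun n => (m n)⁻¹
  let Q : ℕ → ℝ := fun n => (m n) ^ r
  have hη0 : ∀ n, 0 < η n := fun n => inv_pos.2 (hm0 n)
  have hη1 : ∀ n, η n ≤ 1 / 100 := fun n => by
    rw [one_div]; exact inv_anti₀ (by norm_num) (hm n)
  have hQ1 : ∀ n, 1 ≤ Q n := fun n => Real.one_le_rpow (by linarith [hm n]) hr0.le
  have hηr : ∀ n, η n ^ r = (Q n)⁻¹ := fun n => Real.inv_rpow (hm0 n).le r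
  have hη2r : ∀ n, (η n ^ 2) ^ r = (Q n)⁻¹ ^ 2 := fun n => by
    rw [← hηr, ← Real.rpow_natCast, ← Real.rpow_mul (hη0 n).le, mul_comm, Real.rpow_mul (hη0 n).le,
      Real.rpow_natCast]
  have hA0 : ∀ n, 0 ≤ Q n ^ 2 := fun n => by positivity
  have hB0 : ∀ n, 0 < Q n / 2 := fun n => by linarith [hQ1 n]
  have hBA : ∀ n, 2 * (Q n / 2) ≤ Q n ^ 2 := fun n => by nlinarith [hQ1 n]
  refine ⟨fun n => fpBump (η n) (Q n ^ 2) (Q n / 2), 76, ?_, ?_, ?_⟩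
  · intro n
    refine ⟨fpBump_meas _ _ _, fpBump_periodic _ _ _, Q n ^ 2, fun x => ?_⟩
    rw [abs_of_nonneg (fpBump_nonneg (hA0 n) (hB0 n).le x)]
    exact fpBump_le (hA0 n) (by linarith [hBA n, hB0 n]) x
  · intro n
    refine (fp_bump_norm hp1 (hη0 n) (hA0 n) (hB0 n).le).trans (ENNReal.ofReal_le_ofReal ?_)
    have hQ0 : Q n ≠ 0 := by linarith [hQ1 n]
    rw [hr, Real.mul_rpow (by norm_num) (by positivity), Real.mul_rpow (by norm_num) (hη0 n).le,
      hηr, hη2r]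
    have e1 : Q n ^ 2 * ((72:ℝ) ^ r * (Q n)⁻¹ ^ 2) = 72 ^ r := by field_simp
    have e2 : Q n / 2 * ((4:ℝ) ^ r * (Q n)⁻¹) = 4 ^ r / 2 := by field_simp
    have l1 : (72:ℝ) ^ r ≤ 72 := by
      simpa using Real.rpow_le_rpow_of_exponent_le (show (1:ℝ) ≤ 72 by norm_num) hr1
    have l2 : (4:ℝ) ^ r ≤ 4 := by
      simpa using Real.rpow_le_rpow_of_exponent_le (show (1:ℝ) ≤ 4 by norm_num) hr1
    rw [e1, e2]; linarith
  · have hmt : Filter.Tendsto m Filter.atTop Filter.atTop := by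
      apply Filter.Tendsto.const_mul_atTop (by norm_num)
      exact Filter.tendsto_atTop_add_const_right _ _ tendsto_natCast_atTop_atTop
    have ht : Filter.Tendsto (fun n => 1 / 48 * (m n) ^ (3 * r - 1)) Filter.atTop Filter.atTop :=
      Filter.Tendsto.const_mul_atTop (by norm_num) ((tendsto_rpow_atTop hr3).comp hmt)
    have ht2 := ENNReal.tendsto_ofReal_atTop.comp ht
    refine tendsto_of_tendsto_of_tendsto_of_le_of_le ht2 tendsto_const_nhds ?_ (fun _ => le_top)
    intro n
    refine le_trans (ENNReal.ofReal_le_ofReal ?_)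
      (fp_coll_norm hp1 (hη0 n) (hη1 n) (hB0 n) (hBA n))
    have hQ0 : Q n ≠ 0 := by linarith [hQ1 n]
    have hQp : 0 < Q n := by linarith [hQ1 n]
    rw [hr, Real.mul_rpow (by norm_num) (by positivity), hη2r]
    have e1 : (m n) ^ (3 * r - 1) = Q n ^ 3 * η n := by
      rw [Real.rpow_sub (hm0 n), Real.rpow_one, mul_comm 3 r, Real.rpow_mul (hm0 n).le,
        div_eq_mul_inv]
      congr 1
      exact_mod_cast Real.rpow_natCast (Q n) 3
    have l1 : (1:ℝ) ≤ 2 ^ r := Real.one_le_rpow (by norm_num) hr0.le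
    have e2 : (Q n ^ 2) ^ 2 * (Q n / 2) * η n / 24 * (2 ^ r * (Q n)⁻¹ ^ 2) =
        1 / 48 * (Q n ^ 3 * η n) * 2 ^ r := by
      field_simp; ring
    change 1 / 48 * m n ^ (3 * r - 1) ≤ _
    rw [e1, e2]
    have := hη0 n
    exact le_mul_of_one_le_right (by positivity) l1

/-- **Unboundedness of the collision operator on `L^p`, `1 ≤ p < 3`:** there is a
sequence of bounded measurable `2π`-periodic functions, uniformly bounded in
`L^p(0,2π)`, on which the collision operator blows up in `L^p(0,2π)`.  In particular,
no cubic bound `‖C[f]‖_{L^p} ≤ C′ ‖f‖_{L^p}³` can hold. -/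
theorem stmt1 (p : ℝ) (hp1 : 1 ≤ p) (hp3 : p < 3) :
    (∃ (f : ℕ → ℝ → ℝ) (C₀ : ℝ),
      (∀ n, Measurable (f n) ∧ Function.Periodic (f n) (2 * π) ∧ ∃ B : ℝ, ∀ x, |f n x| ≤ B) ∧
      (∀ n, eLpNorm (f n) (ENNReal.ofReal p) μ2π ≤ ENNReal.ofReal C₀) ∧
      Filter.Tendsto (fun n => eLpNorm (collision (f n)) (ENNReal.ofReal p) μ2π)
        Filter.atTop (nhds ⊤)) ∧
    ¬ ∃ C' : ℝ, ∀ f : ℝ → ℝ, Measurable f → Function.Periodic f (2 * π) →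
        (∃ B : ℝ, ∀ x, |f x| ≤ B) →
        eLpNorm (collision f) (ENNReal.ofReal p) μ2π ≤
          ENNReal.ofReal C' * (eLpNorm f (ENNReal.ofReal p) μ2π) ^ 3 := by
  refine ⟨fp_first p hp1 hp3, ?_⟩
  rintro ⟨C', hC⟩
  obtain ⟨f, C₀, h1, h2, h3⟩ := fp_first p hp1 hp3
  have hb : ENNReal.ofReal C' * ENNReal.ofReal C₀ ^ 3 < ⊤ :=
    ENNReal.mul_lt_top ENNReal.ofReal_lt_top (ENNReal.pow_lt_top ENNReal.ofReal_lt_top)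
  obtain ⟨n, hn⟩ := (h3.eventually (lt_mem_nhds hb)).exists
  refine absurd hn (not_lt.2 ((hC (f n) (h1 n).1 (h1 n).2.1 (h1 n).2.2).trans ?_))
  gcongr
  exact h2 n
end
end

section
/- Asymptotics of the collision frequency for non-zero mass: for every β, γ > 0 there exist constants c, C > 0 (depending on β, γ) such that c · sin(p/2)^{5/3} ≤ a(p) ≤ C · sin(p/2)^{5/3} for all p ∈ [0,2π]. In particular a is nonnegative and vanishes on [0,2π] only at p = 0 and p = 2π. -/
open MeasureTheory Real Set

noncomputable section

/-- The Rayleigh–Jeans equilibrium `𝔣(p) = 1/(βω(p)+γ)`. -/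
def fRJ (β γ p : ℝ) : ℝ := 1 / (β * ω p + γ)

/-- The collision frequency `a(p)`, with `p₁ = h(p,p₂)` and `p₃ = p + p₁ − p₂`. -/
def afreq (β γ p : ℝ) : ℝ :=
  ω p / fRJ β γ p *
    ∫ q in (0:ℝ)..(2 * π),
      ω (resH p q) * ω q * ω (p + resH p q - q) *
        (fRJ β γ (resH p q) * fRJ β γ q * fRJ β γ (p + resH p q - q)) / Real.sqrt (Fplus p q)

/-- The integrand of the collision frequency. -/
def colInt (β γ p q : ℝ) : ℝ :=
  ω (resH p q) * ω q * ω (p + resH p q - q) *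
        (fRJ β γ (resH p q) * fRJ β γ q * fRJ β γ (p + resH p q - q)) / Real.sqrt (Fplus p q)

theorem afreq_eq (β γ p : ℝ) :
    afreq β γ p = ω p / fRJ β γ p * ∫ q in (0:ℝ)..(2 * π), colInt β γ p q := rfl

theorem om_nonneg (p : ℝ) : 0 ≤ ω p := abs_nonneg _

theorem om_le_one (p : ℝ) : ω p ≤ 1 := Real.abs_sin_le_one _

theorem om_neg (p : ℝ) : ω (-p) = ω p := by
  unfold ω; rw [neg_div, Real.sin_neg, abs_neg]

theorem om_refl (p : ℝ) : ω (2 * π - p) = ω p := by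
  unfold ω
  rw [show (2 * π - p) / 2 = π - p / 2 by ring, Real.sin_pi_sub]

theorem fRJ_le {β γ : ℝ} (hβ : 0 < β) (hγ : 0 < γ) (p : ℝ) : fRJ β γ p ≤ 1 / γ := by
  unfold fRJ
  have := mul_nonneg hβ.le (om_nonneg p)
  exact one_div_le_one_div_of_le hγ (by linarith)

theorem fRJ_ge {β γ : ℝ} (hβ : 0 < β) (hγ : 0 < γ) (p : ℝ) : 1 / (β + γ) ≤ fRJ β γ p := by
  unfold fRJ
  have := mul_nonneg hβ.le (om_nonneg p)
  have := mul_le_mul_of_nonneg_left (om_le_one p) hβ.le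
  exact one_div_le_one_div_of_le (by linarith) (by linarith)

theorem fRJ_pos {β γ : ℝ} (hβ : 0 < β) (hγ : 0 < γ) (p : ℝ) : 0 < fRJ β γ p :=
  lt_of_lt_of_le (by positivity) (fRJ_ge hβ hγ p)

theorem resH_refl (p q : ℝ) : resH (2 * π - p) (2 * π - q) = - resH p q := by
  unfold resH
  rw [show (2 * π - q - (2 * π - p)) = -(q - p) by ring, abs_neg,
    show (2 * π - p + (2 * π - q)) / 4 = π - (p + q) / 4 by ring, Real.cos_pi_sub, mul_neg,
    Real.arcsin_neg]
  ring

theorem colInt_refl (β γ p q : ℝ) : colInt β γ (2 * π - p) (2 * π - q) = colInt β γ p q := by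
  have e : 2 * π - p + -resH p q - (2 * π - q) = -(p + resH p q - q) := by ring
  have hF : Fplus (2 * π - p) (2 * π - q) = Fplus p q := by
    unfold Fplus
    rw [show (2 * π - p) / 2 = π - p / 2 by ring, show (2 * π - q) / 2 = π - q / 2 by ring]
    simp only [Real.cos_pi_sub, Real.sin_pi_sub]
    ring
  unfold colInt
  rw [resH_refl, e, hF]
  simp only [fRJ, om_neg, om_refl]

theorem afreq_refl (β γ p : ℝ) : afreq β γ (2 * π - p) = afreq β γ p := by
  rw [afreq_eq, afreq_eq]
  have h := intervalIntegral.integral_comp_sub_left (a := 0) (b := 2 * π)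
    (fun q => colInt β γ (2 * π - p) q) (2 * π)
  simp only [colInt_refl, sub_self, sub_zero] at h
  rw [h]
  simp only [fRJ, om_refl]

theorem colInt_nonneg {β γ : ℝ} (hβ : 0 < β) (hγ : 0 < γ) (p q : ℝ) : 0 ≤ colInt β γ p q := by
  unfold colInt
  have h1 := om_nonneg (resH p q)
  have h2 := om_nonneg q
  have h3 := om_nonneg (p + resH p q - q)
  have h4 := (fRJ_pos hβ hγ (resH p q)).le
  have h5 := (fRJ_pos hβ hγ q).le
  have h6 := (fRJ_pos hβ hγ (p + resH p q - q)).le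
  positivity

theorem meas_om : Measurable ω := by
  unfold ω
  have h : Continuous (fun p : ℝ => |Real.sin (p / 2)|) := by fun_prop
  exact h.measurable

theorem meas_resH (p : ℝ) : Measurable (resH p) := by
  unfold resH
  have h1 : Measurable (fun z : ℝ => Real.sin (|z - p| / 4)) :=
    Continuous.measurable (by fun_prop)
  have h2 : Measurable (fun z : ℝ => Real.cos (|z - p| / 4)) :=
    Continuous.measurable (by fun_prop)
  have h3 : Measurable (fun z : ℝ => Real.cos ((p + z) / 4)) :=
    Continuous.measurable (by fun_prop)
  have h4 : Measurable (fun z : ℝ => (z - p) / 2) :=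
    Continuous.measurable (by fun_prop)
  simp only [Real.tan_eq_sin_div_cos]
  exact h4.add ((Real.continuous_arcsin.measurable.comp ((h1.div h2).mul h3)).const_mul 2)

theorem meas_fRJ (β γ : ℝ) : Measurable (fRJ β γ) := by
  unfold fRJ
  exact ((meas_om.const_mul β).add_const γ).const_div 1

theorem meas_colInt (β γ p : ℝ) : Measurable (colInt β γ p) := by
  have hr := meas_resH p
  have h3 : Measurable (fun q => p + resH p q - q) := (hr.const_add p).sub measurable_id
  have hF : Measurable (fun q => Real.sqrt (Fplus p q)) := by
    unfold Fplus
    exact Continuous.measurable (by fun_prop)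
  unfold colInt
  exact ((((meas_om.comp hr).mul meas_om).mul (meas_om.comp h3)).mul
    ((((meas_fRJ β γ).comp hr).mul (meas_fRJ β γ)).mul ((meas_fRJ β γ).comp h3))).div hF

/-- The product of the two outgoing frequencies. -/
theorem om_prod {p q : ℝ} (hp0 : 0 < p) (hp : p < 2 * π) (hq0 : 0 ≤ q) (hq : q ≤ 2 * π) :
    ω (resH p q) * ω (p + resH p q - q)
      = Real.tan ((q - p) / 4) ^ 2 * (Real.sin (p / 2) * Real.sin (q / 2)) := by
  set d := (q - p) / 4 with hd
  set s := (p + q) / 4 with hs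
  set A := Real.tan (|q - p| / 4) * Real.cos s with hA
  have hcd : 0 < Real.cos d := Real.cos_pos_of_mem_Ioo ⟨by linarith, by linarith⟩
  have hx : Real.sin (p / 2) = Real.sin (s - d) := by congr 1; rw [hd, hs]; ring
  have hy : Real.sin (q / 2) = Real.sin (s + d) := by congr 1; rw [hd, hs]; ring
  have hsx : 0 ≤ Real.sin (p / 2) := Real.sin_nonneg_of_nonneg_of_le_pi (by linarith) (by linarith)
  have hsy : 0 ≤ Real.sin (q / 2) := Real.sin_nonneg_of_nonneg_of_le_pi (by linarith) (by linarith)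
  have hprod : Real.sin (p / 2) * Real.sin (q / 2) = Real.cos d ^ 2 - Real.cos s ^ 2 := by
    rw [hx, hy, Real.sin_sub, Real.sin_add]
    have e1 := Real.sin_sq_add_cos_sq s
    have e2 := Real.sin_sq_add_cos_sq d
    linear_combination (Real.cos d ^ 2) * e1 - Real.cos s ^ 2 * e2
  have hA2 : A ^ 2 = Real.tan d ^ 2 * Real.cos s ^ 2 := by
    rw [hA, mul_pow]
    congr 1
    rcases abs_cases (q - p) with ⟨h, _⟩ | ⟨h, _⟩
    · rw [h]
    · rw [h, neg_div, Real.tan_neg, neg_sq]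
  have htan : Real.tan d ^ 2 * Real.cos d ^ 2 = Real.sin d ^ 2 := by
    rw [Real.tan_eq_sin_div_cos]; field_simp
  have hle : A ^ 2 ≤ 1 := by
    have : 0 ≤ Real.sin (p / 2) * Real.sin (q / 2) := mul_nonneg hsx hsy
    have h2 : Real.cos s ^ 2 ≤ Real.cos d ^ 2 := by linarith
    have h3 := mul_le_mul_of_nonneg_left h2 (sq_nonneg (Real.tan d))
    have h4 := Real.sin_sq_le_one d
    linarith
  have hAb := abs_le.mp ((sq_le_one_iff_abs_le_one A).mp hle)
  have hsin : Real.sin (Real.arcsin A) = A := Real.sin_arcsin hAb.1 hAb.2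
  have e1 : resH p q / 2 = Real.arcsin A + d := by
    unfold resH; rw [← hs, ← hA, hd]; ring
  have e2 : (p + resH p q - q) / 2 = Real.arcsin A - d := by
    have : (p + resH p q - q) / 2 = resH p q / 2 - 2 * d := by rw [hd]; ring
    rw [this, e1]; ring
  unfold ω
  rw [e1, e2, ← abs_mul]
  have e3 : Real.sin (Real.arcsin A + d) * Real.sin (Real.arcsin A - d)
      = -(Real.tan d ^ 2 * (Real.sin (p / 2) * Real.sin (q / 2))) := by
    rw [hprod, Real.sin_sub, Real.sin_add]
    have f1 := Real.sin_sq_add_cos_sq (Real.arcsin A)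
    have f2 := Real.sin_sq_add_cos_sq d
    rw [hsin] at f1 ⊢
    linear_combination hA2 + htan + A ^ 2 * f2 - Real.sin d ^ 2 * f1
  rw [e3, abs_neg, abs_of_nonneg]
  exact mul_nonneg (sq_nonneg _) (mul_nonneg hsx hsy)

/-- The reflected integrand, without the equilibrium factors. -/
def kern (x u : ℝ) : ℝ :=
  Real.sin x * (Real.sin u * (Real.cos ((x + u) / 2) / Real.sin ((x + u) / 2))) ^ 2 /
    Real.sqrt ((Real.cos x - Real.cos u) ^ 2 + 4 * Real.sin x * Real.sin u)

theorem colInt_eq (β γ : ℝ) {p v : ℝ} (hp0 : 0 < p) (hp : p < 2 * π) (hv0 : 0 ≤ v)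
    (hv : v ≤ 2 * π) :
    colInt β γ p (2 * π - v) = (fRJ β γ (resH p (2 * π - v)) * fRJ β γ (2 * π - v) *
      fRJ β γ (p + resH p (2 * π - v) - (2 * π - v))) * kern (p / 2) (v / 2) := by
  have h := om_prod (q := 2 * π - v) hp0 hp (by linarith) (by linarith)
  have ht : Real.tan ((2 * π - v - p) / 4)
      = Real.cos ((p / 2 + v / 2) / 2) / Real.sin ((p / 2 + v / 2) / 2) := by
    rw [show (2 * π - v - p) / 4 = π / 2 - (p / 2 + v / 2) / 2 by ring,
      Real.tan_eq_sin_div_cos, Real.sin_pi_div_two_sub, Real.cos_pi_div_two_sub]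
  have hy : (2 * π - v) / 2 = π - v / 2 := by ring
  have hsv : 0 ≤ Real.sin (v / 2) := Real.sin_nonneg_of_nonneg_of_le_pi (by linarith) (by linarith)
  have hom : ω (2 * π - v) = Real.sin (v / 2) := by
    rw [om_refl]; exact abs_of_nonneg hsv
  have hF : Fplus p (2 * π - v) = (Real.cos (p / 2) - Real.cos (v / 2)) ^ 2
      + 4 * Real.sin (p / 2) * Real.sin (v / 2) := by
    unfold Fplus
    rw [hy, Real.cos_pi_sub, Real.sin_pi_sub]; ring
  rw [ht, hy, Real.sin_pi_sub] at h
  unfold colInt kern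
  rw [hF, mul_right_comm (ω _), h, hom]
  ring

theorem sin_le_two {x u : ℝ} (hx0 : 0 < x) (hx : x ≤ π / 2) (hu0 : 0 ≤ u) (hu : u ≤ π) :
    Real.sin u ≤ 2 * Real.sin ((x + u) / 2) := by
  have e1 : Real.sin u = 2 * Real.sin (u / 2) * Real.cos (u / 2) := by
    rw [← Real.sin_two_mul]; congr 1; ring
  have e2 : Real.sin ((x + u) / 2) = Real.sin (x / 2) * Real.cos (u / 2)
      + Real.cos (x / 2) * Real.sin (u / 2) := by
    rw [← Real.sin_add]; congr 1; ring
  have a1 : 0 ≤ Real.sin (u / 2) := Real.sin_nonneg_of_nonneg_of_le_pi (by linarith) (by linarith)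
  have a2 : 0 ≤ Real.cos (u / 2) := Real.cos_nonneg_of_mem_Icc ⟨by linarith, by linarith⟩
  have a3 : 0 ≤ Real.sin (x / 2) := Real.sin_nonneg_of_nonneg_of_le_pi (by linarith) (by linarith)
  have a4 : 0 ≤ Real.cos (x / 2) := Real.cos_nonneg_of_mem_Icc ⟨by linarith, by linarith⟩
  rw [e1, e2]
  rcases le_total u x with h | h
  · have : Real.sin (u / 2) ≤ Real.sin (x / 2) :=
      Real.sin_le_sin_of_le_of_le_pi_div_two (by linarith) (by linarith) (by linarith)
    nlinarith [mul_le_mul_of_nonneg_right this a2, mul_nonneg a4 a1]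
  · have : Real.cos (u / 2) ≤ Real.cos (x / 2) :=
      Real.cos_le_cos_of_nonneg_of_le_pi (by linarith) (by linarith) (by linarith)
    nlinarith [mul_le_mul_of_nonneg_right this a1, mul_nonneg a3 a2]

theorem kern_le {x u : ℝ} (hx0 : 0 < x) (hx : x ≤ π / 2) (hu0 : 0 ≤ u) (hu : u ≤ π) {m : ℝ}
    (hm : 0 < m)
    (hF : m ≤ Real.sqrt ((Real.cos x - Real.cos u) ^ 2 + 4 * Real.sin x * Real.sin u)) :
    kern x u ≤ 4 * Real.sin x / m := by
  have hS : 0 ≤ Real.sin x := Real.sin_nonneg_of_nonneg_of_le_pi (by linarith) (by linarith)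
  have hw : 0 < Real.sin ((x + u) / 2) :=
    Real.sin_pos_of_pos_of_lt_pi (by linarith) (by linarith)
  have hsu : 0 ≤ Real.sin u := Real.sin_nonneg_of_nonneg_of_le_pi hu0 hu
  have h1 := sin_le_two hx0 hx hu0 hu
  have h2 : (Real.sin u * (Real.cos ((x + u) / 2) / Real.sin ((x + u) / 2))) ^ 2 ≤ 4 := by
    have e : (Real.sin u * (Real.cos ((x + u) / 2) / Real.sin ((x + u) / 2))) ^ 2
        = Real.sin u ^ 2 * Real.cos ((x + u) / 2) ^ 2 / Real.sin ((x + u) / 2) ^ 2 := by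
      field_simp
    rw [e, div_le_iff₀ (by positivity)]
    have h3 : Real.sin u ^ 2 ≤ 4 * Real.sin ((x + u) / 2) ^ 2 := by nlinarith
    have h4 := Real.cos_sq_le_one ((x + u) / 2)
    have := mul_le_mul_of_nonneg_left h4 (sq_nonneg (Real.sin u))
    linarith
  unfold kern
  have h3 := mul_le_mul_of_nonneg_left h2 hS
  exact div_le_div₀ (by positivity) (by linarith) hm hF

theorem F_lower1 {x u : ℝ} (hx0 : 0 < x) (hx : x ≤ π / 2) (hu0 : 0 ≤ u) (hu : u ≤ π) :
    u ^ 2 / 20 ≤ Real.sqrt ((Real.cos x - Real.cos u) ^ 2 + 4 * Real.sin x * Real.sin u) := by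
  have hS : 0 ≤ Real.sin x := Real.sin_nonneg_of_nonneg_of_le_pi (by linarith) (by linarith)
  have hsu : 0 ≤ Real.sin u := Real.sin_nonneg_of_nonneg_of_le_pi hu0 hu
  have hcx : 0 ≤ Real.cos x := Real.cos_nonneg_of_mem_Icc ⟨by linarith, hx⟩
  have e1 := Real.sin_sq_add_cos_sq x
  have e2 := Real.sin_sq_add_cos_sq u
  have hx1 := Real.cos_le_one x
  have hu1 := Real.cos_le_one u
  have hu2 := Real.neg_one_le_cos u
  have hq : u ^ 2 / 5 ≤ 1 - Real.cos u := by
    have h := Real.cos_le_one_sub_mul_cos_sq (x := u) (by rw [abs_of_nonneg hu0]; exact hu)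
    have hpi : π ^ 2 ≤ 10 := by nlinarith [Real.pi_lt_d2, Real.pi_pos]
    have : (1:ℝ) / 5 ≤ 2 / π ^ 2 := by
      rw [div_le_div_iff₀ (by norm_num) (by positivity)]; linarith
    nlinarith [mul_le_mul_of_nonneg_right this (sq_nonneg u)]
  have key : ((1 - Real.cos u) / 4) ^ 2
      ≤ (Real.cos x - Real.cos u) ^ 2 + 4 * Real.sin x * Real.sin u := by
    have hp := mul_nonneg hS hsu
    by_cases h1 : 1 - Real.cos x ≤ (1 - Real.cos u) / 2
    · nlinarith
    · push Not at h1
      by_cases h2 : 1 - Real.cos u ≤ 3 / 2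
      · have h3 : 1 - Real.cos x ≤ Real.sin x ^ 2 := by nlinarith
        have h4 : (1 - Real.cos u) / 2 ≤ Real.sin u ^ 2 := by nlinarith
        have h5 : ((1 - Real.cos u) / 2) ^ 2 ≤ (Real.sin x * Real.sin u) ^ 2 := by
          rw [mul_pow, sq]
          exact mul_le_mul (by linarith) h4 (by linarith) (sq_nonneg _)
        have h6 := abs_le_of_sq_le_sq h5 hp
        have h7 : (1 - Real.cos u) / 2 ≤ Real.sin x * Real.sin u := (le_abs_self _).trans h6
        nlinarith [sq_nonneg (Real.cos x - Real.cos u)]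
      · push Not at h2
        nlinarith
  calc u ^ 2 / 20 ≤ (1 - Real.cos u) / 4 := by linarith
    _ ≤ _ := Real.le_sqrt_of_sq_le key

theorem F_lower2 {x u : ℝ} (hx0 : 0 < x) (hx : x ≤ π / 2) (hu0 : 0 ≤ u) (hu : u ≤ 1) :
    Real.sqrt (Real.sin x * (2 * u))
      ≤ Real.sqrt ((Real.cos x - Real.cos u) ^ 2 + 4 * Real.sin x * Real.sin u) := by
  have hS : 0 ≤ Real.sin x := Real.sin_nonneg_of_nonneg_of_le_pi (by linarith) (by linarith)
  have h : 2 / π * u ≤ Real.sin u := Real.mul_le_sin hu0 (by linarith [Real.pi_gt_three])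
  have h2 : (1:ℝ) / 2 ≤ 2 / π := by
    rw [div_le_div_iff₀ (by norm_num) Real.pi_pos]; linarith [Real.pi_lt_four]
  have h3 : u / 2 ≤ Real.sin u := by nlinarith
  apply Real.sqrt_le_sqrt
  nlinarith [mul_le_mul_of_nonneg_left h3 hS, sq_nonneg (Real.cos x - Real.cos u)]

theorem kern_ge {x u t : ℝ} (ht0 : 0 < t) (ht1 : t ≤ 1) (hx0 : 0 < x) (hx : x ≤ π / 2)
    (hxt : Real.sin x = t ^ 3) (hu0 : t / 2 ≤ u) (hu : u ≤ t) :
    t / 30000 ≤ kern x u := by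
  have hup : 0 < u := by linarith
  have hpi := Real.pi_lt_d2
  have hpi3 := Real.pi_gt_three
  have ht3 : t ^ 3 ≤ t := by nlinarith [mul_pos ht0 ht0, mul_le_mul_of_nonneg_left ht1 ht0.le]
  have hxle : x ≤ 1.6 * t := by
    have h := Real.mul_le_sin hx0.le hx
    rw [hxt] at h
    have h2 : (1:ℝ) / 1.6 ≤ 2 / π := by
      rw [div_le_div_iff₀ (by norm_num) Real.pi_pos]; linarith
    have h3 := mul_le_mul_of_nonneg_right h2 hx0.le
    norm_num at h3
    linarith
  set w := (x + u) / 2 with hw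
  have hwle : w ≤ 1.3 * t := by rw [hw]; linarith
  have hw0 : 0 < w := by rw [hw]; linarith
  have hsw : 0 < Real.sin w := Real.sin_pos_of_pos_of_lt_pi hw0 (by linarith)
  have hsw2 : Real.sin w ≤ 1.3 * t := (Real.sin_le hw0.le).trans hwle
  have hcw : 0.1 ≤ Real.cos w := by
    have := Real.one_sub_sq_div_two_le_cos (x := w)
    nlinarith
  have hsu : t / 4 ≤ Real.sin u := by
    have h : 2 / π * u ≤ Real.sin u := Real.mul_le_sin hup.le (by linarith)
    have h2 : (1:ℝ) / 2 ≤ 2 / π := by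
      rw [div_le_div_iff₀ (by norm_num) Real.pi_pos]; linarith
    nlinarith
  have hsu2 : Real.sin u ≤ t := (Real.sin_le hup.le).trans hu
  have hr : 1 / 100 ≤ Real.sin u * (Real.cos w / Real.sin w) := by
    rw [← mul_div_assoc, le_div_iff₀ hsw]
    nlinarith [mul_le_mul hsu hcw (by norm_num) (by linarith)]
  have hr2 : (1 / 100 : ℝ) ^ 2 ≤ (Real.sin u * (Real.cos w / Real.sin w)) ^ 2 :=
    pow_le_pow_left₀ (by norm_num) hr 2
  have hF : (Real.cos x - Real.cos u) ^ 2 + 4 * Real.sin x * Real.sin u ≤ (3 * t ^ 2) ^ 2 := by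
    have a1 := Real.one_sub_sq_div_two_le_cos (x := x)
    have a2 := Real.one_sub_sq_div_two_le_cos (x := u)
    have a3 := Real.cos_le_one x
    have a4 := Real.cos_le_one u
    have b1 : Real.cos x - Real.cos u ≤ 1.28 * t ^ 2 := by nlinarith
    have b2 : -(1.28 * t ^ 2) ≤ Real.cos x - Real.cos u := by nlinarith
    have b3 : (Real.cos x - Real.cos u) ^ 2 ≤ (1.28 * t ^ 2) ^ 2 := sq_le_sq' b2 b1
    have b4 : Real.sin x * Real.sin u ≤ t ^ 3 * t := by
      rw [hxt]; exact mul_le_mul_of_nonneg_left hsu2 (by positivity)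
    nlinarith [pow_pos ht0 4]
  have hF2 : Real.sqrt ((Real.cos x - Real.cos u) ^ 2 + 4 * Real.sin x * Real.sin u)
      ≤ 3 * t ^ 2 := Real.sqrt_le_iff.mpr ⟨by positivity, hF⟩
  have hFp : 0 < Real.sqrt ((Real.cos x - Real.cos u) ^ 2 + 4 * Real.sin x * Real.sin u) := by
    apply Real.sqrt_pos.mpr
    have : 0 < Real.sin x * Real.sin u := by rw [hxt]; exact mul_pos (by positivity) (by linarith)
    nlinarith [sq_nonneg (Real.cos x - Real.cos u)]
  unfold kern
  rw [← hw, le_div_iff₀ hFp]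
  calc t / 30000 * _ ≤ t / 30000 * (3 * t ^ 2) := mul_le_mul_of_nonneg_left hF2 (by positivity)
    _ = t ^ 3 * (1 / 100) ^ 2 := by ring
    _ ≤ _ := by rw [hxt]; exact mul_le_mul_of_nonneg_left hr2 (by positivity)

theorem kern_nonneg {x u : ℝ} (hx0 : 0 < x) (hx : x ≤ π / 2) : 0 ≤ kern x u := by
  have hS : 0 ≤ Real.sin x := Real.sin_nonneg_of_nonneg_of_le_pi (by linarith) (by linarith)
  unfold kern; positivity

theorem int_bounds {β γ : ℝ} (hβ : 0 < β) (hγ : 0 < γ) {p t : ℝ} (hp0 : 0 < p) (hp : p ≤ π)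
    (ht0 : 0 < t) (ht1 : t ≤ 1) (hpt : Real.sin (p / 2) = t ^ 3) :
    (1 / (β + γ)) ^ 3 / 30000 * t ^ 2 ≤ ∫ q in (0:ℝ)..(2 * π), colInt β γ p q ∧
    (∫ q in (0:ℝ)..(2 * π), colInt β γ p q) ≤ 328 * (1 / γ) ^ 3 * t ^ 2 := by
  have hpi3 := Real.pi_gt_three
  have hsub : ∫ q in (0:ℝ)..(2 * π), colInt β γ p q
      = ∫ v in (0:ℝ)..(2 * π), colInt β γ p (2 * π - v) := by
    have h := intervalIntegral.integral_comp_sub_left (a := 0) (b := 2 * π)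
      (fun q => colInt β γ p q) (2 * π)
    simp only [sub_self, sub_zero] at h
    exact h.symm
  rw [hsub]
  set Ψ : ℝ → ℝ := fun v => colInt β γ p (2 * π - v) with hΨ
  have hmeas : Measurable Ψ := (meas_colInt β γ p).comp (measurable_const.sub measurable_id)
  have hnn : ∀ v, 0 ≤ Ψ v := fun v => colInt_nonneg hβ hγ _ _
  have hup : ∀ v, 0 ≤ v → v ≤ 2 * π → Ψ v ≤ (1 / γ) ^ 3 * kern (p / 2) (v / 2) := by
    intro v hv0 hv
    simp only [hΨ]
    rw [colInt_eq β γ hp0 (by linarith) hv0 hv]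
    apply mul_le_mul_of_nonneg_right _ (kern_nonneg (by linarith) (by linarith))
    have h4 := (fRJ_pos hβ hγ (resH p (2 * π - v))).le
    have h5 := (fRJ_pos hβ hγ (2 * π - v)).le
    have h6 := (fRJ_pos hβ hγ (p + resH p (2 * π - v) - (2 * π - v))).le
    have k4 := fRJ_le hβ hγ (resH p (2 * π - v))
    have k5 := fRJ_le hβ hγ (2 * π - v)
    have k6 := fRJ_le hβ hγ (p + resH p (2 * π - v) - (2 * π - v))
    rw [show (1 / γ) ^ 3 = 1 / γ * (1 / γ) * (1 / γ) by ring]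
    gcongr
  have hlo : ∀ v, 0 ≤ v → v ≤ 2 * π → (1 / (β + γ)) ^ 3 * kern (p / 2) (v / 2) ≤ Ψ v := by
    intro v hv0 hv
    simp only [hΨ]
    rw [colInt_eq β γ hp0 (by linarith) hv0 hv]
    apply mul_le_mul_of_nonneg_right _ (kern_nonneg (by linarith) (by linarith))
    have h4 := (fRJ_pos hβ hγ (resH p (2 * π - v))).le
    have h5 := (fRJ_pos hβ hγ (2 * π - v)).le
    have k4 := fRJ_ge hβ hγ (resH p (2 * π - v))
    have k5 := fRJ_ge hβ hγ (2 * π - v)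
    have k6 := fRJ_ge hβ hγ (p + resH p (2 * π - v) - (2 * π - v))
    rw [show (1 / (β + γ)) ^ 3 = 1 / (β + γ) * (1 / (β + γ)) * (1 / (β + γ)) by ring]
    gcongr
  -- dominating functions
  set g1 : ℝ → ℝ := fun v => (1 / γ) ^ 3 * (4 * Real.sqrt (t ^ 3)) * v ^ (-(1/2) : ℝ) with hg1
  set g2 : ℝ → ℝ := fun v => (1 / γ) ^ 3 * (320 * t ^ 3) * v ^ (-2 : ℝ) with hg2
  have hd1 : ∀ v ∈ Set.Ioc 0 t, Ψ v ≤ g1 v := by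
    intro v hv
    refine (hup v hv.1.le (by linarith [hv.2])).trans ?_
    simp only [hg1]
    rw [mul_assoc ((1 / γ) ^ 3)]
    apply mul_le_mul_of_nonneg_left _ (by positivity)
    have hF := F_lower2 (x := p / 2) (u := v / 2) (by linarith) (by linarith)
      (by linarith [hv.1]) (by linarith [hv.2])
    rw [hpt, show 2 * (v / 2) = v by ring] at hF
    have hv0 := hv.1
    have hm : 0 < Real.sqrt (t ^ 3 * v) := Real.sqrt_pos.mpr (by positivity)
    rw [← hpt] at hF
    have hk := kern_le (x := p / 2) (u := v / 2) (by linarith) (by linarith)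
      (by linarith [hv.1]) (by linarith [hv.2]) (by rw [hpt]; exact hm) hF
    rw [hpt] at hk
    refine hk.trans (le_of_eq ?_)
    rw [Real.rpow_neg hv0.le, ← Real.sqrt_eq_rpow, Real.sqrt_mul (by positivity)]
    have s1 : 0 < Real.sqrt (t ^ 3) := Real.sqrt_pos.mpr (by positivity)
    have s2 : 0 < Real.sqrt v := Real.sqrt_pos.mpr hv0
    have s3 : Real.sqrt (t ^ 3) ^ 2 = t ^ 3 := Real.sq_sqrt (by positivity)
    rw [← s3]
    rw [Real.sqrt_sq s1.le]
    field_simp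
  have hd2 : ∀ v ∈ Set.Ioc t (2 * π), Ψ v ≤ g2 v := by
    intro v hv
    have hv0 : 0 < v := ht0.trans hv.1
    refine (hup v hv0.le hv.2).trans ?_
    simp only [hg2]
    rw [mul_assoc ((1 / γ) ^ 3)]
    apply mul_le_mul_of_nonneg_left _ (by positivity)
    have hF := F_lower1 (x := p / 2) (u := v / 2) (by linarith) (by linarith)
      (by linarith) (by linarith [hv.2])
    have hk := kern_le (x := p / 2) (u := v / 2) (by linarith) (by linarith)
      (by linarith) (by linarith [hv.2]) (by positivity) hF
    rw [hpt] at hk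
    refine hk.trans (le_of_eq ?_)
    rw [Real.rpow_neg hv0.le]
    norm_num
    field_simp
    norm_num
  have hi1 : IntervalIntegrable g1 volume 0 t :=
    (intervalIntegral.intervalIntegrable_rpow' (by norm_num)).const_mul _
  have h0t : (0:ℝ) ∉ Set.uIcc t (2 * π) := by
    rw [Set.uIcc_of_le (by linarith)]
    intro h; linarith [h.1]
  have hi2 : IntervalIntegrable g2 volume t (2 * π) :=
    (intervalIntegral.intervalIntegrable_rpow (Or.inr h0t)).const_mul _
  have hI1 : IntervalIntegrable Ψ volume 0 t := by
    rw [intervalIntegrable_iff_integrableOn_Ioc_of_le ht0.le] at hi1 ⊢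
    refine hi1.mono' hmeas.aestronglyMeasurable ?_
    refine (ae_restrict_iff' measurableSet_Ioc).mpr (Filter.Eventually.of_forall ?_)
    intro v hv
    rw [Real.norm_of_nonneg (hnn v)]
    exact hd1 v hv
  have hI2 : IntervalIntegrable Ψ volume t (2 * π) := by
    rw [intervalIntegrable_iff_integrableOn_Ioc_of_le (by linarith)] at hi2 ⊢
    refine hi2.mono' hmeas.aestronglyMeasurable ?_
    refine (ae_restrict_iff' measurableSet_Ioc).mpr (Filter.Eventually.of_forall ?_)
    intro v hv
    rw [Real.norm_of_nonneg (hnn v)]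
    exact hd2 v hv
  have hsplit := intervalIntegral.integral_add_adjacent_intervals hI1 hI2
  have hJ1 : ∫ v in (0:ℝ)..t, Ψ v ≤ 8 * (1 / γ) ^ 3 * t ^ 2 := by
    have hle : ∫ v in (0:ℝ)..t, Ψ v ≤ ∫ v in (0:ℝ)..t, g1 v := by
      rw [intervalIntegral.integral_of_le ht0.le, intervalIntegral.integral_of_le ht0.le]
      exact setIntegral_mono_on hI1.1 hi1.1 measurableSet_Ioc hd1
    refine hle.trans (le_of_eq ?_)
    simp only [hg1]
    rw [intervalIntegral.integral_const_mul, integral_rpow (Or.inl (by norm_num))]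
    rw [show (-(1/2) + 1 : ℝ) = 1/2 by norm_num, Real.zero_rpow (by norm_num),
      ← Real.sqrt_eq_rpow]
    have : Real.sqrt (t ^ 3) * Real.sqrt t = t ^ 2 := by
      rw [← Real.sqrt_mul (by positivity), show t ^ 3 * t = (t ^ 2) ^ 2 by ring,
        Real.sqrt_sq (by positivity)]
    linear_combination 8 * (1 / γ) ^ 3 * this
  have hJ2 : ∫ v in t..(2 * π), Ψ v ≤ 320 * (1 / γ) ^ 3 * t ^ 2 := by
    have hle : ∫ v in t..(2 * π), Ψ v ≤ ∫ v in t..(2 * π), g2 v := by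
      rw [intervalIntegral.integral_of_le (by linarith), intervalIntegral.integral_of_le (by linarith)]
      exact setIntegral_mono_on hI2.1 hi2.1 measurableSet_Ioc hd2
    refine hle.trans ?_
    simp only [hg2]
    rw [intervalIntegral.integral_const_mul, integral_rpow (Or.inr ⟨by norm_num, h0t⟩)]
    rw [show (-2 + 1 : ℝ) = -1 by norm_num, Real.rpow_neg_one, Real.rpow_neg_one]
    have h2p : 0 < (2 * π)⁻¹ := by positivity
    have hle2 : ((2 * π)⁻¹ - t⁻¹) / (-1) ≤ t⁻¹ := by
      rw [div_neg, div_one]; linarith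
    refine (mul_le_mul_of_nonneg_left hle2 (by positivity)).trans (le_of_eq ?_)
    field_simp
  have hI2a : IntervalIntegrable Ψ volume t (2 * t) :=
    hI2.mono_set (by
      rw [Set.uIcc_of_le (by linarith), Set.uIcc_of_le (by linarith)]
      exact Set.Icc_subset_Icc le_rfl (by linarith))
  have hI2b : IntervalIntegrable Ψ volume (2 * t) (2 * π) :=
    hI2.mono_set (by
      rw [Set.uIcc_of_le (by linarith), Set.uIcc_of_le (by linarith)]
      exact Set.Icc_subset_Icc (by linarith) le_rfl)
  have hsplit2 := intervalIntegral.integral_add_adjacent_intervals hI2a hI2b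
  have n1 : 0 ≤ ∫ v in (0:ℝ)..t, Ψ v :=
    intervalIntegral.integral_nonneg ht0.le (fun v _ => hnn v)
  have n2 : 0 ≤ ∫ v in (2 * t)..(2 * π), Ψ v :=
    intervalIntegral.integral_nonneg (by linarith) (fun v _ => hnn v)
  have hlow : (1 / (β + γ)) ^ 3 / 30000 * t ^ 2 ≤ ∫ v in t..(2 * t), Ψ v := by
    have hc : ∫ v in t..(2 * t), (1 / (β + γ)) ^ 3 * (t / 30000)
        = (1 / (β + γ)) ^ 3 / 30000 * t ^ 2 := by
      rw [intervalIntegral.integral_const, smul_eq_mul]; ring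
    rw [← hc]
    refine intervalIntegral.integral_mono_on (by linarith) intervalIntegrable_const hI2a ?_
    intro v hv
    refine le_trans ?_ (hlo v (by linarith [hv.1]) (by linarith [hv.2]))
    apply mul_le_mul_of_nonneg_left _ (by positivity)
    exact kern_ge ht0 ht1 (by linarith) (by linarith) hpt (by linarith [hv.1]) (by linarith [hv.2])
  constructor
  · linarith
  · linarith

theorem afreq_bounds {β γ : ℝ} (hβ : 0 < β) (hγ : 0 < γ) {p : ℝ} (hp0 : 0 < p) (hp : p ≤ π) :
    γ * ((1 / (β + γ)) ^ 3 / 30000) * Real.sin (p / 2) ^ ((5:ℝ)/3) ≤ afreq β γ p ∧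
    afreq β γ p ≤ (β + γ) * (328 * (1 / γ) ^ 3) * Real.sin (p / 2) ^ ((5:ℝ)/3) := by
  have hS : 0 < Real.sin (p / 2) := Real.sin_pos_of_pos_of_lt_pi (by linarith) (by linarith)
  have hS1 := Real.sin_le_one (p / 2)
  set t := Real.sin (p / 2) ^ ((1:ℝ)/3) with ht
  have ht0 : 0 < t := Real.rpow_pos_of_pos hS _
  have ht1 : t ≤ 1 := Real.rpow_le_one hS.le hS1 (by norm_num)
  have hpt : Real.sin (p / 2) = t ^ 3 := by
    rw [ht, ← Real.rpow_natCast, ← Real.rpow_mul hS.le]; norm_num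
  have h5 : Real.sin (p / 2) ^ ((5:ℝ)/3) = t ^ 5 := by
    rw [ht, ← Real.rpow_natCast, ← Real.rpow_mul hS.le]; norm_num
  obtain ⟨hl, hu⟩ := int_bounds hβ hγ hp0 hp ht0 ht1 hpt
  have hom : ω p = t ^ 3 := by
    unfold ω; rw [abs_of_nonneg hS.le, hpt]
  have hfac : ω p / fRJ β γ p = t ^ 3 * (β * t ^ 3 + γ) := by
    unfold fRJ; rw [hom]; simp
  have ht31 : t ^ 3 ≤ 1 := by rw [← hpt]; exact hS1
  have hb : β * t ^ 3 ≤ β := by nlinarith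
  have hb0 : 0 < β * t ^ 3 := by positivity
  rw [h5, afreq_eq, hfac]
  set I := ∫ q in (0:ℝ)..(2 * π), colInt β γ p q
  have hI0 : 0 ≤ I := le_trans (by positivity) hl
  constructor
  · calc γ * ((1 / (β + γ)) ^ 3 / 30000) * t ^ 5
        = t ^ 3 * γ * ((1 / (β + γ)) ^ 3 / 30000 * t ^ 2) := by ring
      _ ≤ t ^ 3 * (β * t ^ 3 + γ) * I := by
        apply mul_le_mul _ hl (by positivity) (by positivity)
        apply mul_le_mul_of_nonneg_left _ (by positivity)
        linarith
  · calc t ^ 3 * (β * t ^ 3 + γ) * I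
        ≤ t ^ 3 * (β + γ) * (328 * (1 / γ) ^ 3 * t ^ 2) := by
          apply mul_le_mul _ hu hI0 (by positivity)
          apply mul_le_mul_of_nonneg_left _ (by positivity)
          linarith
      _ = _ := by ring

theorem stmt8 (β γ : ℝ) (hβ : 0 < β) (hγ : 0 < γ) :
    ∃ c C : ℝ, 0 < c ∧ 0 < C ∧ ∀ p ∈ Set.Icc (0:ℝ) (2 * π),
      (c * Real.sin (p / 2) ^ ((5:ℝ)/3) ≤ afreq β γ p ∧
        afreq β γ p ≤ C * Real.sin (p / 2) ^ ((5:ℝ)/3)) ∧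
      (0 ≤ afreq β γ p ∧ (afreq β γ p = 0 ↔ p = 0 ∨ p = 2 * π)) := by
  refine ⟨γ * ((1 / (β + γ)) ^ 3 / 30000), (β + γ) * (328 * (1 / γ) ^ 3), by positivity,
    by positivity, ?_⟩
  have hpi := Real.pi_pos
  intro p hp
  by_cases h : p = 0 ∨ p = 2 * π
  · have hs : Real.sin (p / 2) = 0 := by
      rcases h with h | h
      · rw [h]; simp
      · rw [h, show 2 * π / 2 = π by ring, Real.sin_pi]
    have ha : afreq β γ p = 0 := by
      rw [afreq_eq]; unfold ω; rw [hs]; simp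
    rw [ha, hs, Real.zero_rpow (by norm_num)]
    simp [h]
  · have h0 : 0 < p := lt_of_le_of_ne hp.1 (fun e => h (Or.inl e.symm))
    have h2 : p < 2 * π := lt_of_le_of_ne hp.2 (fun e => h (Or.inr e))
    have hb : γ * ((1 / (β + γ)) ^ 3 / 30000) * Real.sin (p / 2) ^ ((5:ℝ)/3) ≤ afreq β γ p ∧
        afreq β γ p ≤ (β + γ) * (328 * (1 / γ) ^ 3) * Real.sin (p / 2) ^ ((5:ℝ)/3) := by
      rcases le_total p π with hle | hle
      · exact afreq_bounds hβ hγ h0 hle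
      · have := afreq_bounds hβ hγ (p := 2 * π - p) (by linarith) (by linarith)
        rwa [afreq_refl, show (2 * π - p) / 2 = π - p / 2 by ring, Real.sin_pi_sub] at this
    have hS : 0 < Real.sin (p / 2) := Real.sin_pos_of_pos_of_lt_pi (by linarith) (by linarith)
    have hpos : 0 < afreq β γ p := lt_of_lt_of_le (by positivity) hb.1
    exact ⟨hb, hpos.le, fun e => absurd e hpos.ne', fun e => absurd e h⟩
end
end
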